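/- arXiv:2405.05593 — 4 statements merged into one kernel-verified Lean document; each statement's English description precedes it below -/
import Mathlib

section
/- Suppose f : ℝ → ℝ is continuous, satisfies the negative feedback condition x·f(x) < 0 for all x ≠ 0, is differentiable at 0 with f′(0) < 0, and a : ℝ → ℝ is continuous, T-periodic with T > 1, and satisfies a(t) ≥ m₀ > 0 for all t, where |f′(0)|·m₀ > 1/e. Then for every initial function φ ∈ C([−1,0],ℝ) with φ(s) < 0 for all s ∈ [−1,0], the solution x(·,φ) of x′(t) = a(t) f(x(t−1)) is slowly oscillating: it has an increasing unbounded sequence of zeros 0 < t₁ < t₂ < ⋯ with t_{k+1} − t_k > 1 for all k, and x(t) > 0 on each interval (t_{2k−1}, t_{2k}) while x(t) < 0 on each interval (t_{2k}, t_{2k+1}). Likewise, for every initial function ψ with ψ(s) > 0 on [−1,0], the solution x(·,ψ) is slowly oscillating with the sign pattern reversed on consecutive intervals between zeros. -/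
/-!
If a solution were eventually of one sign, say positive, the feedback makes it decrease to `0`, and
linearizing `f` at `0` yields `x'(t) ≤ -p x(t-1)` for large `t`, with a constant `p > 1/e`.
This is impossible (`no_positive_of_delay_ineq`): a lower bound `x(t-1) ≥ λ x(t)` improves itself by
Grönwall to `x(t-1) ≥ exp(λ p) x(t) ≥ (e p) λ x(t)`, so the ratio `x(t-1)/x(t)` tends to infinity,
whereas integrating the inequality over two half-delays bounds this ratio.

Hence every solution of one sign on an interval of length one has a next zero (`exists_next_zero`).
Right after such a zero the feedback drives `x` to the opposite sign and keeps it moving away from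
`0` for one unit of time, so the next zero comes more than one delay later and the situation
repeats with the sign reversed. The two signs are treated together through the odd symmetry
`x ↦ σ x`, `f ↦ σ f(σ ·)` with `σ = ±1`.
-/

open Set Filter

/-- `x` is the solution on `[-1,∞)` of `x'(t) = a(t) f(x(t-1))` with initial function `φ`:
continuous on `[-1,∞)`, equal to `φ` on `[-1,0]`, and satisfying the integral equation. -/
def IsSolution (a f φ x : ℝ → ℝ) : Prop :=
  ContinuousOn x (Ici (-1 : ℝ)) ∧ (∀ s ∈ Icc (-1 : ℝ) 0, x s = φ s) ∧
    ∀ t ≥ (0 : ℝ), x t = φ 0 + ∫ s in (0:ℝ)..t, a s * f (x (s - 1))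

/-- `x` is slowly oscillating with sign pattern `σ`: it has an increasing unbounded sequence of
positive zeros whose consecutive gaps exceed the delay `1`, and on the interval between the
`n`-th and `(n+1)`-st zero the sign of `x` is that of `σ * (-1)^n`.  For `σ = 1` the solution is
positive on the first such interval (the case of negative initial data), for `σ = -1` negative. -/
def SlowOscPat (x : ℝ → ℝ) (σ : ℝ) : Prop :=
  ∃ t : ℕ → ℝ, StrictMono t ∧ 0 < t 0 ∧ Tendsto t atTop atTop ∧
    (∀ n, x (t n) = 0) ∧ (∀ n, 1 < t (n + 1) - t n) ∧
    ∀ n, ∀ s ∈ Ioo (t n) (t (n + 1)), 0 < σ * (-1) ^ n * x s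

open Topology

/-! ### No solution stays of one sign -/

/-- The differential inequality `x'(t) ≤ -p x(t-1)` with `p > 1/e` has no eventually positive
solution. -/
lemma no_positive_of_delay_ineq (x : ℝ → ℝ) (p t0 : ℝ) (hp : 1 / Real.exp 1 < p)
    (hx : ∀ t ≥ t0, 0 < x t)
    (hd : ∀ t ≥ t0 + 1, ∃ d, HasDerivAt x d t ∧ d ≤ -p * x (t - 1)) : False := by
  have hp0 : 0 < p := lt_trans (by positivity) hp
  have hep : 1 < Real.exp 1 * p := by
    rw [div_lt_iff₀ (Real.exp_pos 1)] at hp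
    linarith
  have hanti : AntitoneOn x (Ici (t0 + 1)) := by
    apply antitoneOn_of_deriv_nonpos (convex_Ici _)
    · intro t ht
      obtain ⟨d, h1, -⟩ := hd t ht
      exact h1.continuousAt.continuousWithinAt
    · intro t ht
      obtain ⟨d, h1, -⟩ := hd t (interior_subset ht)
      exact h1.differentiableAt.differentiableWithinAt
    · intro t ht
      have ht' : t0 + 1 ≤ t := interior_subset ht
      obtain ⟨d, h1, h2⟩ := hd t ht'
      rw [h1.deriv]
      have := mul_pos hp0 (hx (t - 1) (by linarith))
      linarith
  have hiter : ∀ n : ℕ, ∃ S ≥ t0 + 2, ∀ t ≥ S, (Real.exp 1 * p) ^ n * x t ≤ x (t - 1) := by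
    intro n
    induction n with
    | zero =>
      refine ⟨t0 + 2, le_rfl, fun t ht => ?_⟩
      rw [pow_zero, one_mul]
      exact hanti (by simp only [mem_Ici]; linarith) (by simp only [mem_Ici]; linarith)
        (by linarith)
    | succ n ih =>
      obtain ⟨S, hS, h⟩ := ih
      refine ⟨S + 1, by linarith, fun t ht => ?_⟩
      set l := (Real.exp 1 * p) ^ n with hl
      have hder : ∀ s ≥ S, ∃ d ≤ 0, HasDerivAt (fun s => x s * Real.exp (l * p * s)) d s := by
        intro s hs
        obtain ⟨d, h1, h2⟩ := hd s (by linarith)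
        have he : HasDerivAt (fun s => Real.exp (l * p * s)) (Real.exp (l * p * s) * (l * p)) s := by
          simpa using ((hasDerivAt_id s).const_mul (l * p)).exp
        refine ⟨_, ?_, h1.mul he⟩
        have h3 := mul_le_mul_of_nonneg_left (h s hs) hp0.le
        have h4 : d + x s * (l * p) ≤ 0 := by linarith
        nlinarith [Real.exp_pos (l * p * s)]
      have hA : AntitoneOn (fun s => x s * Real.exp (l * p * s)) (Ici S) := by
        apply antitoneOn_of_deriv_nonpos (convex_Ici _)
        · intro s hs
          obtain ⟨d, -, h1⟩ := hder s hs
          exact h1.continuousAt.continuousWithinAt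
        · intro s hs
          obtain ⟨d, -, h1⟩ := hder s (interior_subset hs)
          exact h1.differentiableAt.differentiableWithinAt
        · intro s hs
          obtain ⟨d, h0, h1⟩ := hder s (interior_subset hs)
          rw [h1.deriv]
          exact h0
      have h5 : x t * Real.exp (l * p * t) ≤ x (t - 1) * Real.exp (l * p * (t - 1)) :=
        hA (by simp only [mem_Ici]; linarith) (by simp only [mem_Ici]; linarith) (by linarith)
      have h6 : Real.exp (l * p * t) = Real.exp (l * p) * Real.exp (l * p * (t - 1)) := by
        rw [← Real.exp_add]
        ring_nf
      rw [h6, ← mul_assoc] at h5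
      have h7 := le_of_mul_le_mul_right h5 (Real.exp_pos _)
      have h8 : Real.exp 1 * (l * p) ≤ Real.exp (l * p) := Real.exp_one_mul_le_exp
      have h9 := mul_le_mul_of_nonneg_left h8 (hx t (by linarith)).le
      calc (Real.exp 1 * p) ^ (n + 1) * x t = x t * (Real.exp 1 * (l * p)) := by
            rw [pow_succ, ← hl]; ring
        _ ≤ x (t - 1) := h9.trans h7
  -- On `[t, t + 1/2]` the delayed argument is at most `t - 1/2`, so `x` falls by at least
  -- `(p/2) x(t - 1/2)` there.
  have hhalf : ∀ t ≥ t0 + 2, p / 2 * x (t - 1 / 2) ≤ x t := by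
    intro t ht
    have := Convex.image_sub_le_mul_sub_of_deriv_le (f := x) (D := Icc t (t + 1 / 2))
      (convex_Icc _ _) (C := -p * x (t - 1 / 2)) ?_ ?_ ?_ t (by simp) (t + 1 / 2) (by simp)
      (by linarith)
    · have h2 := hx (t + 1 / 2) (by linarith)
      linarith
    · intro s hs
      obtain ⟨d, h1, -⟩ := hd s (by linarith [hs.1])
      exact h1.continuousAt.continuousWithinAt
    · intro s hs
      obtain ⟨d, h1, -⟩ := hd s (by linarith [(interior_subset hs).1])
      exact h1.differentiableAt.differentiableWithinAt
    · intro s hs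
      have hs' := interior_subset hs
      obtain ⟨d, h1, h2⟩ := hd s (by linarith [hs'.1])
      rw [h1.deriv]
      refine h2.trans ?_
      have h3 : x (t - 1 / 2) ≤ x (s - 1) := hanti (by simp only [mem_Ici]; linarith [hs'.1])
        (by simp only [mem_Ici]; linarith) (by linarith [hs'.2])
      nlinarith
  obtain ⟨n, hn⟩ := pow_unbounded_of_one_lt (4 / p ^ 2) hep
  obtain ⟨S, hS, h⟩ := hiter n
  have h1 := h (S + 1) (by linarith)
  have h2 := hhalf (S + 1) (by linarith)
  have h3 := hhalf (S + 1 - 1 / 2) (by linarith)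
  rw [show S + 1 - 1 / 2 - 1 / 2 = S + 1 - 1 by ring] at h3
  have hpos := hx (S + 1) (by linarith)
  have h4 : p / 2 * (p / 2 * x (S + 1 - 1)) ≤ x (S + 1) :=
    (mul_le_mul_of_nonneg_left h3 (by positivity)).trans h2
  rw [div_lt_iff₀ (by positivity)] at hn
  have h5 := mul_lt_mul_of_pos_right hn hpos
  have h6 := mul_le_mul_of_nonneg_left h1 (sq_nonneg p)
  nlinarith

/-- Negative feedback with `|f'(0)| m₀ > 1/e` forbids a solution that stays positive: the
solution decreases to `0`, where the linearization of `f` gives the delay inequality. -/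
lemma no_positive_solution (f a x : ℝ → ℝ) (f' m0 τ : ℝ)
    (hf : Continuous f) (hfb : ∀ u : ℝ, u ≠ 0 → u * f u < 0)
    (hdf : HasDerivAt f f' 0) (hf'neg : f' < 0)
    (hm0 : 0 < m0) (ham : ∀ t, m0 ≤ a t)
    (hcond : 1 / Real.exp 1 < |f'| * m0)
    (hd : ∀ t > τ, HasDerivAt x (a t * f (x (t - 1))) t)
    (hx : ∀ t > τ - 1, 0 < x t) : False := by
  have hfneg : ∀ u > 0, f u < 0 := fun u hu => by
    by_contra! h
    exact absurd (hfb u hu.ne') (not_lt.2 (mul_nonneg hu.le h))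
  have hanti : AntitoneOn x (Ici (τ + 1)) := by
    apply antitoneOn_of_deriv_nonpos (convex_Ici _)
    · intro t ht
      exact (hd t (by linarith [mem_Ici.1 ht])).continuousAt.continuousWithinAt
    · intro t ht
      have ht' : τ + 1 ≤ t := interior_subset ht
      exact (hd t (by linarith)).differentiableAt.differentiableWithinAt
    · intro t ht
      have ht' : τ + 1 ≤ t := interior_subset ht
      rw [(hd t (by linarith)).deriv]
      exact mul_nonpos_of_nonneg_of_nonpos (hm0.le.trans (ham t))
        (hfneg _ (hx _ (by linarith))).le
  have hsmall : ∀ ε > 0, ∃ S ≥ τ + 1, x S < ε := by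
    intro ε hε
    by_contra! h
    have hM : ε ≤ x (τ + 1) := h _ le_rfl
    obtain ⟨u, hu, hmax⟩ := isCompact_Icc.exists_isMaxOn (nonempty_Icc.2 hM) hf.continuousOn
    have hfu := hfneg u (hε.trans_le hu.1)
    have hk : m0 * f u < 0 := mul_neg_of_pos_of_neg hm0 hfu
    have hlin : ∀ t ≥ τ + 2, x t - x (τ + 2) ≤ m0 * f u * (t - (τ + 2)) := by
      intro t ht
      refine Convex.image_sub_le_mul_sub_of_deriv_le (D := Ici (τ + 2)) (convex_Ici _)
        ?_ ?_ ?_ _ (by simp) _ (by simpa using ht) ht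
      · intro t ht
        exact (hd t (by linarith [mem_Ici.1 ht])).continuousAt.continuousWithinAt
      · intro t ht
        have ht' : τ + 2 ≤ t := interior_subset ht
        exact (hd t (by linarith)).differentiableAt.differentiableWithinAt
      · intro t ht
        have ht' : τ + 2 ≤ t := interior_subset ht
        rw [(hd t (by linarith)).deriv]
        have h1 : f (x (t - 1)) ≤ f u := hmax ⟨h _ (by linarith),
          hanti (by simp) (by simp only [mem_Ici]; linarith) (by linarith)⟩
        have h2 := ham t
        nlinarith
    have hx2 := hx (τ + 2) (by linarith)
    have hq : 0 < x (τ + 2) / (-(m0 * f u)) := div_pos hx2 (by linarith)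
    have h1 := hlin (τ + 2 + x (τ + 2) / (-(m0 * f u))) (by linarith)
    have h2 := hx (τ + 2 + x (τ + 2) / (-(m0 * f u))) (by linarith)
    have h3 : m0 * f u * (τ + 2 + x (τ + 2) / (-(m0 * f u)) - (τ + 2)) = - x (τ + 2) := by
      have := hk.ne
      have hm := hm0.ne'
      have hu0 := hfu.ne
      field_simp
      ring
    linarith
  have hf0 : f 0 = 0 := by
    have h1 : f 0 ≤ 0 := by
      refine le_of_tendsto (hf.continuousWithinAt (s := Ioi 0) (x := 0)).tendsto ?_
      filter_upwards [self_mem_nhdsWithin] with u hu using (hfneg u hu).le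
    have h2 : 0 ≤ f 0 := by
      refine ge_of_tendsto (hf.continuousWithinAt (s := Iio 0) (x := 0)).tendsto ?_
      filter_upwards [self_mem_nhdsWithin] with u hu
      by_contra! h
      exact absurd (hfb u (ne_of_lt hu)) (not_lt.2 (mul_nonneg_of_nonpos_of_nonpos
        (le_of_lt hu) h.le))
    exact le_antisymm h1 h2
  obtain ⟨c, hc1, hc2⟩ : ∃ c, 1 / Real.exp 1 / m0 < c ∧ c < -f' := by
    apply exists_between
    rw [div_lt_iff₀ hm0]
    rwa [abs_of_neg hf'neg] at hcond
  rw [div_lt_iff₀ hm0] at hc1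
  have hlin : ∃ δ > 0, ∀ u, 0 < u → u < δ → f u ≤ -c * u := by
    have h1 := hasDerivAt_iff_tendsto_slope_zero.1 hdf
    have h2 : ∀ᶠ u in 𝓝[≠] (0 : ℝ), u⁻¹ • (f (0 + u) - f 0) < -c :=
      h1.eventually_lt_const (by linarith)
    rw [eventually_nhdsWithin_iff, Metric.eventually_nhds_iff] at h2
    obtain ⟨δ, hδ, h⟩ := h2
    refine ⟨δ, hδ, fun u hu hu' => ?_⟩
    have h3 := h (y := u) (by rwa [Real.dist_eq, sub_zero, abs_of_pos hu]) hu.ne'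
    rw [hf0, zero_add, sub_zero, smul_eq_mul, inv_mul_lt_iff₀ hu] at h3
    linarith
  obtain ⟨δ, hδ, hlin⟩ := hlin
  obtain ⟨S, hS, hxS⟩ := hsmall δ hδ
  refine no_positive_of_delay_ineq x (c * m0) S hc1 (fun t ht => hx t (by linarith))
    fun t ht => ⟨_, hd t (by linarith), ?_⟩
  have h1 := hx (t - 1) (by linarith)
  have h2 : x (t - 1) ≤ x S := hanti hS (by simp only [mem_Ici]; linarith) (by linarith)
  have h3 := hlin _ h1 (h2.trans_lt hxS)
  have h4 := hfneg _ h1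
  have h5 := ham t
  nlinarith

/-! ### Zeros of a solution -/

lemma exists_next_zero (f a x : ℝ → ℝ) (f' m0 τ : ℝ)
    (hf : Continuous f) (hfb : ∀ u : ℝ, u ≠ 0 → u * f u < 0)
    (hdf : HasDerivAt f f' 0) (hf'neg : f' < 0)
    (hm0 : 0 < m0) (ham : ∀ t, m0 ≤ a t)
    (hcond : 1 / Real.exp 1 < |f'| * m0)
    (hc : ContinuousOn x (Ici τ))
    (hd : ∀ t > τ, HasDerivAt x (a t * f (x (t - 1))) t)
    (hx : ∀ t ∈ Ioc (τ - 1) τ, 0 < x t) :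
    ∃ v > τ, x v = 0 ∧ ∀ s ∈ Ico τ v, 0 < x s := by
  obtain ⟨b, hb, hxb⟩ : ∃ b > τ - 1, x b ≤ 0 := by
    by_contra! h
    exact no_positive_solution f a x f' m0 τ hf hfb hdf hf'neg hm0 ham hcond hd h
  have hτb : τ < b := by
    by_contra! h
    exact absurd (hx b ⟨hb, h⟩) (not_lt.2 hxb)
  have hcb : ContinuousOn x (Icc τ b) := hc.mono Icc_subset_Ici_self
  have hK : IsCompact (Icc τ b ∩ x ⁻¹' {0}) :=
    isCompact_Icc.of_isClosed_subset
      (hcb.preimage_isClosed_of_isClosed isClosed_Icc isClosed_singleton) inter_subset_left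
  have hxτ : 0 < x τ := hx τ ⟨by linarith, le_rfl⟩
  obtain ⟨w, hw, hw0⟩ := intermediate_value_Icc' hτb.le hcb ⟨hxb, hxτ.le⟩
  obtain ⟨v, ⟨hv, hv0⟩, hleast⟩ := hK.exists_isLeast ⟨w, hw, hw0⟩
  rw [mem_preimage, mem_singleton_iff] at hv0
  refine ⟨v, lt_of_le_of_ne hv.1 ?_, hv0, fun s hs => ?_⟩
  · rintro rfl
    exact hxτ.ne' hv0
  · by_contra! h
    obtain ⟨r, hr, hr0⟩ := intermediate_value_Icc' hs.1 (hc.mono Icc_subset_Ici_self)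
      ⟨h, hxτ.le⟩
    have := hleast ⟨⟨hr.1, by linarith [hr.2, hs.2, hv.2]⟩, hr0⟩
    linarith [hr.2, hs.2]

/-- The integral equation yields the differential equation at every positive time. -/
lemma IsSolution.hasDerivAt {a f φ x : ℝ → ℝ} (h : IsSolution a f φ x)
    (ha : Continuous a) (hf : Continuous f) {t : ℝ} (ht : 0 < t) :
    HasDerivAt x (a t * f (x (t - 1))) t := by
  obtain ⟨hc, -, heq⟩ := h
  -- Extending `x` by a constant to the left of `-1` makes the integrand globally continuous.
  have hxe : Continuous fun s => x (max (s - 1) (-1)) :=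
    hc.comp_continuous (by fun_prop) fun s => mem_Ici.2 (le_max_right _ _)
  have hg : Continuous fun s => a s * f (x (max (s - 1) (-1))) := ha.mul (hf.comp hxe)
  have h1 := ((hg.integral_hasStrictDerivAt 0 t).hasDerivAt).const_add (φ 0)
  rw [max_eq_left (by linarith : (-1 : ℝ) ≤ t - 1)] at h1
  refine h1.congr_of_eventuallyEq ?_
  filter_upwards [lt_mem_nhds ht] with s hs
  rw [heq s hs.le]
  congr 1
  refine intervalIntegral.integral_congr fun r hr => ?_
  rw [uIcc_of_le hs.le] at hr
  rw [max_eq_left (by linarith [hr.1] : (-1 : ℝ) ≤ r - 1)]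

/-! ### The oscillation pattern -/

/-- A solution of sign `σ = ±1` on the initial interval oscillates slowly, with sign `-σ` between
its first two zeros. -/
lemma slowOscPat_of_sign (f a φ x : ℝ → ℝ) (f' m0 σ : ℝ) (hσ : σ * σ = 1)
    (hf : Continuous f) (hfb : ∀ x : ℝ, x ≠ 0 → x * f x < 0)
    (hdf : HasDerivAt f f' 0) (hf'neg : f' < 0)
    (ha : Continuous a) (hm0 : 0 < m0) (ham : ∀ t, m0 ≤ a t)
    (hcond : 1 / Real.exp 1 < |f'| * m0)
    (hφ : ∀ s ∈ Icc (-1 : ℝ) 0, 0 < σ * φ s) (hsol : IsSolution a f φ x) :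
    SlowOscPat x (-σ) := by
  have hd : ∀ t > 0, HasDerivAt x (a t * f (x (t - 1))) t :=
    fun t ht => hsol.hasDerivAt ha hf ht
  have hxc : ContinuousOn x (Ici 0) := hsol.1.mono (Ici_subset_Ici.2 (by norm_num))
  -- The odd symmetry: `ρ x` solves the equation with nonlinearity `ρ f(ρ ·)`.
  have hnext : ∀ ρ : ℝ, ρ * ρ = 1 → ∀ τ ≥ 0, (∀ t ∈ Ioc (τ - 1) τ, 0 < ρ * x t) →
      ∃ v > τ, x v = 0 ∧ ∀ s ∈ Ico τ v, 0 < ρ * x s := by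
    intro ρ hρ τ hτ hpos
    have hρ0 : ρ ≠ 0 := by
      rintro rfl
      simp at hρ
    have key : ∃ v > τ, ρ * x v = 0 ∧ ∀ s ∈ Ico τ v, 0 < ρ * x s := by
      refine exists_next_zero (fun u => ρ * f (ρ * u)) a (fun t => ρ * x t)
        f' m0 τ (by fun_prop) ?_ ?_ hf'neg hm0 ham hcond ?_ ?_ hpos
      · intro u hu
        have := hfb (ρ * u) (mul_ne_zero hρ0 hu)
        calc u * (ρ * f (ρ * u)) = ρ * u * f (ρ * u) := by ring
          _ < 0 := this
      · have h1 : HasDerivAt (fun u : ℝ => ρ * u) ρ 0 := by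
          simpa using (hasDerivAt_id (0 : ℝ)).const_mul ρ
        have h2 : HasDerivAt f f' (ρ * 0) := by simpa using hdf
        have h3 := (h2.comp (0 : ℝ) h1).const_mul ρ
        refine h3.congr_deriv ?_
        linear_combination f' * hρ
      · exact continuousOn_const.mul (hxc.mono (Ici_subset_Ici.2 hτ))
      · intro t ht
        have h1 := (hd t (lt_of_le_of_lt hτ ht)).const_mul ρ
        refine h1.congr_deriv ?_
        rw [← mul_assoc ρ ρ (x (t - 1)), hρ, one_mul]
        ring
    obtain ⟨v, hv, hv0, hvp⟩ := key
    exact ⟨v, hv, (mul_eq_zero.1 hv0).resolve_left hρ0, hvp⟩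
  -- The invariant at the `n`-th zero `u`: on the unit interval before it, `x` has sign `σ (-1)^n`.
  set P : ℕ → ℝ → Prop := fun n u =>
    0 < u ∧ x u = 0 ∧ ∀ s ∈ Ioo (u - 1) u, 0 < σ * (-1) ^ n * x s with hP
  have hstep : ∀ n u, P n u → ∃ v, u + 1 < v ∧ P (n + 1) v ∧
      ∀ s ∈ Ioo u v, 0 < σ * (-1) ^ (n + 1) * x s := by
    rintro n u ⟨hu, hu0, hneg⟩
    set ρ := σ * (-1) ^ (n + 1) with hρdef
    have hρ : ρ * ρ = 1 := by
      rw [hρdef, mul_mul_mul_comm, hσ, ← mul_pow]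
      norm_num
    have hmono : StrictMonoOn (fun t => ρ * x t) (Icc u (u + 1)) := by
      apply strictMonoOn_of_deriv_pos (convex_Icc _ _)
      · exact continuousOn_const.mul (hxc.mono fun s hs => hu.le.trans hs.1)
      · intro t ht
        rw [interior_Icc] at ht
        have h1 := (hd t (hu.trans ht.1)).const_mul ρ
        rw [h1.deriv]
        have h2 := hneg (t - 1) ⟨by linarith [ht.1], by linarith [ht.2]⟩
        have h3 : ρ * x (t - 1) < 0 := by
          rw [hρdef, pow_succ]
          linarith
        have hx0 : x (t - 1) ≠ 0 := by
          intro h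
          simp [h] at h3
        have h4 := hfb _ hx0
        -- `ρ x(t-1) < 0` and `x(t-1) f(x(t-1)) < 0` force `ρ f(x(t-1)) > 0`, since `ρ² = 1`.
        have h5 : 0 < (ρ * x (t - 1)) * (x (t - 1) * f (x (t - 1))) :=
          mul_pos_of_neg_of_neg h3 h4
        have h6 : 0 < ρ * f (x (t - 1)) := by
          refine pos_of_mul_pos_right (b := ρ * f (x (t - 1))) (a := x (t - 1) ^ 2) ?_
            (sq_nonneg _)
          linarith
        have := mul_pos (hm0.trans_le (ham t)) h6
        linarith
    have hpos : ∀ t ∈ Ioc u (u + 1), 0 < ρ * x t := by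
      intro t ht
      have := hmono ⟨le_rfl, by linarith⟩ ⟨ht.1.le, ht.2⟩ ht.1
      simpa [hu0] using this
    obtain ⟨v, hv, hv0, hvp⟩ := hnext ρ hρ (u + 1) (by linarith) (by simpa using hpos)
    have hall : ∀ s ∈ Ioo u v, 0 < ρ * x s := by
      intro s hs
      rcases le_total s (u + 1) with h | h
      · exact hpos s ⟨hs.1, h⟩
      · exact hvp s ⟨h, hs.2⟩
    exact ⟨v, hv, ⟨by linarith, hv0, fun s hs => hall s ⟨by linarith [hs.1], hs.2⟩⟩, hall⟩
  have hinit : ∃ u, P 0 u := by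
    have hxφ : ∀ s ∈ Icc (-1 : ℝ) 0, 0 < σ * x s := fun s hs => by
      rw [hsol.2.1 s hs]
      exact hφ s hs
    obtain ⟨v, hv, hv0, hvp⟩ := hnext σ hσ 0 le_rfl
      fun t ht => hxφ t ⟨by linarith [ht.1], ht.2⟩
    refine ⟨v, hv, hv0, fun s hs => ?_⟩
    rw [pow_zero, mul_one]
    rcases le_total s 0 with h | h
    · exact hxφ s ⟨by linarith [hs.1], h⟩
    · exact hvp s ⟨h, hs.2⟩
  obtain ⟨u0, hu0⟩ := hinit
  choose! next hn1 hn2 hn3 using hstep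
  let t : ℕ → ℝ := fun n => Nat.rec u0 next n
  have ht : ∀ n, P n (t n) := by
    intro n
    induction n with
    | zero => exact hu0
    | succ n ih => exact hn2 n (t n) ih
  have hgap : ∀ n, t n + 1 < t (n + 1) := fun n => hn1 n (t n) (ht n)
  have hgrow : ∀ n : ℕ, (n : ℝ) ≤ t n := by
    intro n
    induction n with
    | zero => simpa using (ht 0).1.le
    | succ n ih =>
      push_cast
      linarith [hgap n]
  refine ⟨t, strictMono_nat_of_lt_succ fun n => by linarith [hgap n], (ht 0).1,
    tendsto_atTop_mono hgrow tendsto_natCast_atTop_atTop, fun n => (ht n).2.1,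
    fun n => by linarith [hgap n], fun n s hs => ?_⟩
  have := hn3 n (t n) (ht n) s hs
  rw [pow_succ] at this
  linarith

/-- for continuous `f` with negative feedback, `f'(0) < 0`, and a continuous
`T`-periodic coefficient `a ≥ m₀ > 0` with `|f'(0)|·m₀ > 1/e`, every solution with sign-definite
initial function is slowly oscillating, with the appropriate alternating sign pattern. -/
theorem stmt0 (f a : ℝ → ℝ) (f' m0 T : ℝ)
    (hf : Continuous f) (hfb : ∀ x : ℝ, x ≠ 0 → x * f x < 0)
    (hdf : HasDerivAt f f' 0) (hf'neg : f' < 0)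
    (ha : Continuous a) (haT : Function.Periodic a T) (hT : 1 < T)
    (hm0 : 0 < m0) (ham : ∀ t, m0 ≤ a t)
    (hcond : 1 / Real.exp 1 < |f'| * m0) :
    (∀ φ x : ℝ → ℝ, ContinuousOn φ (Icc (-1 : ℝ) 0) → (∀ s ∈ Icc (-1 : ℝ) 0, φ s < 0) →
      IsSolution a f φ x → SlowOscPat x 1) ∧
    (∀ ψ x : ℝ → ℝ, ContinuousOn ψ (Icc (-1 : ℝ) 0) → (∀ s ∈ Icc (-1 : ℝ) 0, 0 < ψ s) →
      IsSolution a f ψ x → SlowOscPat x (-1)) := by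
  refine ⟨fun φ x _ hneg hsol => ?_, fun ψ x _ hpos hsol => ?_⟩
  · rw [← neg_neg (1 : ℝ)]
    exact slowOscPat_of_sign f a φ x f' m0 (-1) (by norm_num) hf hfb hdf hf'neg ha hm0 ham hcond
      (fun s hs => by linarith [hneg s hs]) hsol
  · exact slowOscPat_of_sign f a ψ x f' m0 1 (by norm_num) hf hfb hdf hf'neg ha hm0 ham hcond
      (fun s hs => by linarith [hpos s hs]) hsol
end

section
/- Assume 0 < a₂ < a₁ (so that |m| < 1), b > 0, and p₁ > 2, and assume the shape conditions p₁ − 3 ≤ −h*/a₁ ≤ p₁ − 2 and −h*/a₁ + 3 ≤ T, where h* := b/(m − 1) < 0. Then the solution x(·,h*) with constant initial function ≡ h* is T-periodic, i.e. x(t + T, h*) = x(t, h*) for all t ≥ 0, and it is slowly oscillating with exactly two zeros in each period interval (nT, (n+1)T]. -/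
/-!
Write `T = p1 + p2` and `u = -hstar / a1 > 0`.  Suppose that `c ≥ 0` is a multiple of `T`, that
`x c = -a1 * u`, and that `x < 0` on `(c - 1, c)`.  Then the right-hand side is known piece by
piece: `x` climbs with slope `a1` to the zero `c + u` and on to `c + u + 1`, falls with slope `-a1`
through the zero `c + u + 2` until `c + p1`, falls with slope `-a2` until `c + u + 3`, and finally
climbs with slope `a2` until `c + T`.  The shape conditions are what puts the breakpoints
`u + 1 < u + 2 ≤ p1 ≤ u + 3 ≤ T` in this order.  The function so obtained is `profile`
(`eq_profile`), and the equation `hstar = b / (m - 1)` says exactly that its final value is again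
`-a1 * u` (`profile_end`).  As it is negative on `(u + 2, T]`, the situation at `c + T` is the one
at `c`, and induction over the periods shows that `x` is the periodic repetition of `profile`
(`eq_profile_nat`).  All claims are then read off from the signs of `profile`.

The two climbing phases may be longer than the delay, so there the sign of the delayed term is
itself part of what has to be shown; `ramp` settles this by the method of steps.
-/

open Set Filter

/-- `t mod T`, i.e. `t - T⌊t/T⌋ ∈ [0,T)` for `T > 0`. -/
noncomputable def rmod (T t : ℝ) : ℝ := t - T * (⌊t / T⌋ : ℝ)

/-- `f₀(x) = -sign x`. -/
noncomputable def f0 (x : ℝ) : ℝ := -Real.sign x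

/-- The `(p₁+p₂)`-periodic step coefficient. -/
noncomputable def A0 (p1 p2 a1 a2 t : ℝ) : ℝ :=
  if rmod (p1 + p2) t < p1 then a1 else a2

/-- Solution with constant initial function `≡ h`. -/
def IsSolutionC (a f : ℝ → ℝ) (h : ℝ) (x : ℝ → ℝ) : Prop :=
  IsSolution a f (fun _ => h) x

/-- `x` is slowly oscillating: it has an increasing unbounded sequence of positive zeros whose
consecutive differences exceed the delay `1`, and between consecutive zeros `x` is nonzero with
alternating signs. -/
def SlowlyOscillating (x : ℝ → ℝ) : Prop :=
  ∃ t : ℕ → ℝ, StrictMono t ∧ (∀ n, 0 < t n) ∧ Tendsto t atTop atTop ∧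
    (∀ n, x (t n) = 0) ∧ (∀ n, 1 < t (n + 1) - t n) ∧
    (∀ n, ∀ s ∈ Ioo (t n) (t (n + 1)), x s ≠ 0) ∧
    (∀ n, ∀ s ∈ Ioo (t n) (t (n + 1)), ∀ u ∈ Ioo (t (n + 1)) (t (n + 2)), x s * x u < 0)

/-! ### The equation in integrated form -/

lemma rmod_nat_add {T : ℝ} (hT : 0 < T) (n : ℕ) {τ : ℝ} (h0 : 0 ≤ τ) (h1 : τ < T) :
    rmod T (n * T + τ) = τ := by
  have h : ⌊(n * T + τ) / T⌋ = (n : ℤ) := by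
    rw [Int.floor_eq_iff]
    constructor
    · rw [le_div_iff₀ hT]; push_cast; linarith
    · rw [div_lt_iff₀ hT]; push_cast; linarith
  unfold rmod
  rw [h]
  push_cast
  ring

lemma f0_of_neg {y : ℝ} (h : y < 0) : f0 y = 1 := by simp [f0, Real.sign_of_neg h]

lemma f0_of_pos {y : ℝ} (h : 0 < y) : f0 y = -1 := by simp [f0, Real.sign_of_pos h]

lemma measurable_f0 : Measurable f0 := by
  unfold f0 Real.sign
  exact (Measurable.ite measurableSet_Iio measurable_const
    (Measurable.ite measurableSet_Ioi measurable_const measurable_const)).neg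

lemma measurable_A0 (p1 p2 a1 a2 : ℝ) : Measurable (A0 p1 p2 a1 a2) := by
  unfold A0 rmod
  refine Measurable.ite (measurableSet_lt ?_ measurable_const) measurable_const measurable_const
  fun_prop

/-- The right-hand side is integrable: it is bounded, and measurable because `x` is continuous
on `[-1, ∞)`.  Without this the integrals up to different times could not be subtracted. -/
lemma integrable_rhs {p1 p2 a1 a2 h : ℝ} {x : ℝ → ℝ}
    (hx : IsSolutionC (A0 p1 p2 a1 a2) f0 h x) {t : ℝ} (ht : 0 ≤ t) :
    IntervalIntegrable (fun s => A0 p1 p2 a1 a2 s * f0 (x (s - 1))) MeasureTheory.volume 0 t := by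
  rw [intervalIntegrable_iff_integrableOn_Ioc_of_le ht]
  have hc : ContinuousOn (fun s => x (s - 1)) (Ioc 0 t) := by
    refine hx.1.comp (by fun_prop) ?_
    intro s hs
    simp only [mem_Ici]
    linarith [hs.1]
  have hm : AEMeasurable (fun s => A0 p1 p2 a1 a2 s * f0 (x (s - 1)))
      (MeasureTheory.volume.restrict (Ioc 0 t)) :=
    (measurable_A0 p1 p2 a1 a2).aemeasurable.mul
      (measurable_f0.comp_aemeasurable (hc.aemeasurable measurableSet_Ioc))
  refine MeasureTheory.Integrable.of_bound hm.aestronglyMeasurable ((|a1| + |a2|) * 1)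
    (Eventually.of_forall fun s => ?_)
  rw [Real.norm_eq_abs, abs_mul]
  refine mul_le_mul ?_ ?_ (abs_nonneg _) (by positivity)
  · unfold A0
    split_ifs
    · linarith [abs_nonneg a2]
    · linarith [abs_nonneg a1]
  · rcases lt_trichotomy (x (s - 1)) 0 with h | h | h
    · simp [f0_of_neg h]
    · simp [f0, h]
    · simp [f0_of_pos h]

/-- Where coefficient and delayed feedback are constant, the solution is affine. -/
lemma step {p1 p2 a1 a2 h : ℝ} {x : ℝ → ℝ}
    (hx : IsSolutionC (A0 p1 p2 a1 a2) f0 h x) {s t a e : ℝ} (hs : 0 ≤ s) (hst : s ≤ t)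
    (hA : ∀ r ∈ Ioo s t, A0 p1 p2 a1 a2 r = a) (hf : ∀ r ∈ Ioo s t, f0 (x (r - 1)) = e) :
    x t = x s + a * e * (t - s) := by
  have h1 := hx.2.2 t (hs.trans hst)
  have h2 := hx.2.2 s hs
  have h3 := intervalIntegral.integral_interval_sub_left
    (integrable_rhs hx (hs.trans hst)) (integrable_rhs hx hs)
  have h4 : ∫ r in s..t, A0 p1 p2 a1 a2 r * f0 (x (r - 1)) = a * e * (t - s) := by
    rw [intervalIntegral.integral_of_le hst, MeasureTheory.integral_Ioc_eq_integral_Ioo,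
      MeasureTheory.setIntegral_congr_fun (g := fun _ => a * e) measurableSet_Ioo
        (fun r hr => by simp only [hA r hr, hf r hr])]
    simp [hst, mul_comm]
  linarith

/-- Method of steps: a solution that is negative on `(d - 1, d)` climbs with slope `a` for as long
as the resulting line stays nonpositive.  The induction advances by one unit of delay at a time. -/
lemma ramp {p1 p2 a1 a2 h : ℝ} {x : ℝ → ℝ}
    (hx : IsSolutionC (A0 p1 p2 a1 a2) f0 h x) {d e a v : ℝ} (hd : 0 ≤ d) (ha : 0 < a)
    (hA : ∀ r ∈ Ioo d e, A0 p1 p2 a1 a2 r = a) (hneg : ∀ r ∈ Ioo (d - 1) d, x r < 0)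
    (hv : x d = v) (hend : v + a * (e - d) ≤ 0) :
    ∀ t ∈ Icc d e, x t = v + a * (t - d) := by
  have key : ∀ k : ℕ, ∀ t ∈ Icc d e, t ≤ d + k → x t = v + a * (t - d) := by
    intro k
    induction k with
    | zero =>
      intro t ht htk
      have : t = d := le_antisymm (by simpa using htk) ht.1
      subst this
      simp [hv]
    | succ k ih =>
      intro t ht htk
      push_cast at htk
      have := step hx hd ht.1 (a := a) (e := 1) (fun r hr => hA r ⟨hr.1, hr.2.trans_le ht.2⟩) ?_
      · rw [this, hv]; ring
      · intro r hr
        apply f0_of_neg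
        rcases lt_or_ge (r - 1) d with hrd | hrd
        · exact hneg _ ⟨by linarith [hr.1], hrd⟩
        · rw [ih (r - 1) ⟨hrd, by linarith [hr.2, ht.2]⟩ (by linarith [hr.2])]
          have : a * (r - 1 - d) < a * (e - d) :=
            mul_lt_mul_of_pos_left (by linarith [hr.2, ht.2]) ha
          linarith
  intro t ht
  obtain ⟨k, hk⟩ := exists_nat_ge (t - d)
  exact key k t ht (by linarith)

/-! ### The shape of the solution over one period -/

/-- The values of the periodic solution over one period, as a function of the time elapsed since
the beginning of the period; `u` is the first zero, so the initial value is `-a1 * u`. -/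
noncomputable def profile (p1 a1 a2 u τ : ℝ) : ℝ :=
  if τ ≤ u + 1 then a1 * (τ - u)
  else if τ ≤ p1 then a1 * (u + 2 - τ)
  else if τ ≤ u + 3 then a1 * (u + 2 - p1) - a2 * (τ - p1)
  else a1 * (u + 2 - p1) - a2 * (u + 3 - p1) + a2 * (τ - (u + 3))

lemma profile_zero {p1 a1 a2 u : ℝ} (hu : 0 < u) : profile p1 a1 a2 u 0 = -a1 * u := by
  rw [profile, if_pos (by linarith)]; ring

lemma profile_neg_left {p1 a1 a2 u τ : ℝ} (ha1 : 0 < a1) (h : τ < u) :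
    profile p1 a1 a2 u τ < 0 := by
  rw [profile, if_pos (by linarith)]
  exact mul_neg_of_pos_of_neg ha1 (by linarith)

lemma profile_zero_left {p1 a1 a2 u : ℝ} : profile p1 a1 a2 u u = 0 := by
  rw [profile, if_pos (by linarith)]; ring

lemma profile_pos {p1 a1 a2 u τ : ℝ} (ha1 : 0 < a1) (hp : u + 2 ≤ p1) (h1 : u < τ)
    (h2 : τ < u + 2) : 0 < profile p1 a1 a2 u τ := by
  unfold profile
  rw [if_pos (show τ ≤ p1 by linarith)]
  split_ifs
  · exact mul_pos ha1 (by linarith)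
  · exact mul_pos ha1 (by linarith)

lemma profile_zero_right {p1 a1 a2 u : ℝ} (hp : u + 2 ≤ p1) :
    profile p1 a1 a2 u (u + 2) = 0 := by
  rw [profile, if_neg (by linarith), if_pos hp]; ring

/-- `hfix` is the equation `hstar * (m - 1) = b` with `hstar = -a1 * u`. -/
lemma profile_end_aux {p1 p2 a1 a2 u : ℝ}
    (hfix : a1 * (p1 - 2) + a2 * (6 - 2 * p1 - p2) = 2 * u * (a1 - a2)) :
    a1 * (u + 2 - p1) - a2 * (u + 3 - p1) + a2 * (p1 + p2 - (u + 3)) = -a1 * u := by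
  linear_combination -hfix

lemma profile_end {p1 p2 a1 a2 u : ℝ} (hp1 : u + 2 ≤ p1) (hp2 : 0 < p2)
    (hT : u + 3 ≤ p1 + p2)
    (hfix : a1 * (p1 - 2) + a2 * (6 - 2 * p1 - p2) = 2 * u * (a1 - a2)) :
    profile p1 a1 a2 u (p1 + p2) = -a1 * u := by
  rw [profile, if_neg (by linarith), if_neg (by linarith)]
  split_ifs with h
  · -- Here `T = u + 3`, so the last two pieces agree.
    have := profile_end_aux hfix
    have e : p1 + p2 = u + 3 := le_antisymm h hT
    rw [e] at this ⊢
    linarith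
  · exact profile_end_aux hfix

/-- On `(u + 2, u + 3]` the profile has fallen below zero; afterwards it climbs, but only to the
negative value `-a1 * u`. -/
lemma profile_neg_right {p1 p2 a1 a2 u τ : ℝ} (ha1 : 0 < a1) (ha2 : 0 < a2) (hu : 0 < u)
    (hp1 : u + 2 ≤ p1)
    (hfix : a1 * (p1 - 2) + a2 * (6 - 2 * p1 - p2) = 2 * u * (a1 - a2))
    (h1 : u + 2 < τ) (h2 : τ ≤ p1 + p2) : profile p1 a1 a2 u τ < 0 := by
  unfold profile
  rw [if_neg (by linarith)]
  split_ifs with h3 h4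
  · exact mul_neg_of_pos_of_neg ha1 (by linarith)
  · have : a1 * (u + 2 - p1) ≤ 0 := mul_nonpos_of_nonneg_of_nonpos ha1.le (by linarith)
    have : 0 < a2 * (τ - p1) := mul_pos ha2 (by linarith)
    linarith
  · have h5 := profile_end_aux hfix
    have : a2 * (τ - (u + 3)) ≤ a2 * (p1 + p2 - (u + 3)) :=
      mul_le_mul_of_nonneg_left (by linarith) ha2.le
    have : 0 < a1 * u := mul_pos ha1 hu
    linarith

/-- A solution that starts a period with the value `-a1 * u` after one delay unit of negativity
follows the profile throughout that period. -/
lemma eq_profile {p1 p2 a1 a2 u h : ℝ} {x : ℝ → ℝ}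
    (hx : IsSolutionC (A0 p1 p2 a1 a2) f0 h x)
    (ha1 : 0 < a1) (ha2 : 0 < a2) (hu : 0 < u)
    (hs1 : p1 ≤ u + 3) (hs2 : u + 2 ≤ p1) (hs3 : u + 3 ≤ p1 + p2)
    (hfix : a1 * (p1 - 2) + a2 * (6 - 2 * p1 - p2) = 2 * u * (a1 - a2))
    {c : ℝ} (hc : 0 ≤ c)
    (hA1 : ∀ r, c ≤ r → r < c + p1 → A0 p1 p2 a1 a2 r = a1)
    (hA2 : ∀ r, c + p1 ≤ r → r < c + (p1 + p2) → A0 p1 p2 a1 a2 r = a2)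
    (hxc : x c = -a1 * u) (hneg : ∀ r ∈ Ioo (c - 1) c, x r < 0) :
    ∀ τ ∈ Icc 0 (p1 + p2), x (c + τ) = profile p1 a1 a2 u τ := by
  have up : ∀ t ∈ Icc c (c + u), x t = -a1 * u + a1 * (t - c) :=
    ramp hx hc ha1 (fun r hr => hA1 r hr.1.le (by linarith [hr.2])) hneg hxc (by nlinarith)
  have xu : x (c + u) = 0 := by
    rw [up _ ⟨by linarith, le_rfl⟩]; ring
  have neg1 : ∀ r ∈ Ioo (c - 1) (c + u), x r < 0 := by
    intro r hr
    rcases lt_or_ge r c with h | h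
    · exact hneg r ⟨hr.1, h⟩
    · rw [up r ⟨h, hr.2.le⟩]
      have : a1 * (r - c) < a1 * u := mul_lt_mul_of_pos_left (by linarith [hr.2]) ha1
      linarith
  -- Between `c + u` and `c + u + 1` the delayed value is still negative.
  have up' : ∀ t ∈ Icc (c + u) (c + u + 1), x t = a1 * (t - (c + u)) := by
    intro t ht
    rw [step hx (by linarith) ht.1 (a := a1) (e := 1)
      (fun r hr => hA1 r (by linarith [hr.1]) (by linarith [hr.2, ht.2]))
      (fun r hr => f0_of_neg (neg1 _ ⟨by linarith [hr.1], by linarith [hr.2, ht.2]⟩)), xu]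
    ring
  have down : ∀ t ∈ Icc (c + u + 1) (c + u + 2), x t = a1 * (c + u + 2 - t) := by
    intro t ht
    rw [step hx (by linarith) ht.1 (a := a1) (e := -1)
      (fun r hr => hA1 r (by linarith [hr.1]) (by linarith [hr.2, ht.2])) ?_,
      up' _ ⟨by linarith, le_rfl⟩]
    · ring
    · intro r hr
      apply f0_of_pos
      rw [up' _ ⟨by linarith [hr.1], by linarith [hr.2, ht.2]⟩]
      exact mul_pos ha1 (by linarith [hr.1])
  have pos : ∀ r ∈ Ioo (c + u) (c + u + 2), 0 < x r := by
    intro r hr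
    rcases le_total r (c + u + 1) with h | h
    · rw [up' r ⟨hr.1.le, h⟩]; exact mul_pos ha1 (by linarith [hr.1])
    · rw [down r ⟨h, hr.2.le⟩]; exact mul_pos ha1 (by linarith [hr.2])
  -- Hence the feedback is `-1` all the way from `c + u + 1` to `c + u + 3`.
  have down1 : ∀ t ∈ Icc (c + u + 1) (c + p1), x t = a1 * (c + u + 2 - t) := by
    intro t ht
    rw [step hx (by linarith) ht.1 (a := a1) (e := -1)
      (fun r hr => hA1 r (by linarith [hr.1]) (by linarith [hr.2, ht.2]))
      (fun r hr => f0_of_pos (pos _ ⟨by linarith [hr.1], by linarith [hr.2, ht.2]⟩)),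
      up' _ ⟨by linarith, le_rfl⟩]
    ring
  have down2 : ∀ t ∈ Icc (c + p1) (c + u + 3),
      x t = a1 * (u + 2 - p1) - a2 * (t - (c + p1)) := by
    intro t ht
    rw [step hx (by linarith) ht.1 (a := a2) (e := -1)
      (fun r hr => hA2 r hr.1.le (by linarith [hr.2, ht.2]))
      (fun r hr => f0_of_pos (pos _ ⟨by linarith [hr.1], by linarith [hr.2, ht.2]⟩)),
      down1 _ ⟨by linarith, le_rfl⟩]
    ring
  have neg2 : ∀ r ∈ Ioo (c + u + 3 - 1) (c + u + 3), x r < 0 := by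
    intro r hr
    rcases le_or_gt r (c + p1) with h | h
    · rw [down1 r ⟨by linarith [hr.1], h⟩]
      exact mul_neg_of_pos_of_neg ha1 (by linarith [hr.1])
    · rw [down2 r ⟨h.le, hr.2.le⟩]
      have : a1 * (u + 2 - p1) ≤ 0 := mul_nonpos_of_nonneg_of_nonpos ha1.le (by linarith)
      have : 0 < a2 * (r - (c + p1)) := mul_pos ha2 (by linarith)
      linarith
  have up2 : ∀ t ∈ Icc (c + u + 3) (c + (p1 + p2)),
      x t = a1 * (u + 2 - p1) - a2 * (u + 3 - p1) + a2 * (t - (c + u + 3)) := by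
    refine ramp hx (by linarith) ha2
      (fun r hr => hA2 r (by linarith [hr.1]) (by linarith [hr.2])) neg2 ?_ ?_
    · rw [down2 _ ⟨by linarith, le_rfl⟩]; ring
    · have := profile_end_aux hfix
      have := mul_pos ha1 hu
      linarith
  intro τ hτ
  unfold profile
  split_ifs with h1 h2 h3
  · rcases le_total τ u with h | h
    · rw [up _ ⟨by linarith [hτ.1], by linarith⟩]; ring
    · rw [up' _ ⟨by linarith, by linarith⟩]; ring
  · rw [down1 _ ⟨by linarith, by linarith⟩]; ring
  · rw [down2 _ ⟨by linarith, by linarith⟩]; ring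
  · rw [up2 _ ⟨by linarith, by linarith [hτ.2]⟩]; ring

/-- The solution repeats the profile in every period. -/
lemma eq_profile_nat {p1 p2 a1 a2 u : ℝ} {x : ℝ → ℝ}
    (hx : IsSolutionC (A0 p1 p2 a1 a2) f0 (-a1 * u) x)
    (ha1 : 0 < a1) (ha2 : 0 < a2) (hu : 0 < u) (hp2 : 0 < p2)
    (hs1 : p1 ≤ u + 3) (hs2 : u + 2 ≤ p1) (hs3 : u + 3 ≤ p1 + p2)
    (hfix : a1 * (p1 - 2) + a2 * (6 - 2 * p1 - p2) = 2 * u * (a1 - a2)) (n : ℕ) :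
    ∀ τ ∈ Icc 0 (p1 + p2), x (n * (p1 + p2) + τ) = profile p1 a1 a2 u τ := by
  have hT : 0 < p1 + p2 := by linarith
  have one_period : ∀ n : ℕ, x (n * (p1 + p2)) = -a1 * u →
      (∀ r ∈ Ioo (n * (p1 + p2) - 1) (n * (p1 + p2)), x r < 0) →
      ∀ τ ∈ Icc 0 (p1 + p2), x (n * (p1 + p2) + τ) = profile p1 a1 a2 u τ := by
    intro n h1 h2
    refine eq_profile hx ha1 ha2 hu hs1 hs2 hs3 hfix (by positivity) ?_ ?_ h1 h2
    · intro r hr1 hr2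
      have := rmod_nat_add hT n (τ := r - n * (p1 + p2)) (by linarith) (by linarith)
      rw [add_sub_cancel] at this
      rw [A0, this, if_pos (by linarith)]
    · intro r hr1 hr2
      have := rmod_nat_add hT n (τ := r - n * (p1 + p2)) (by linarith) (by linarith)
      rw [add_sub_cancel] at this
      rw [A0, this, if_neg (by linarith)]
  induction n with
  | zero =>
    have hi := hx.2.1
    refine one_period 0 ?_ ?_
    · rw [Nat.cast_zero, zero_mul]; exact hi 0 (by simp)
    · rw [Nat.cast_zero, zero_mul]
      intro r hr
      rw [hi r ⟨by linarith [hr.1], hr.2.le⟩]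
      have := mul_pos ha1 hu
      linarith
  | succ n ih =>
    refine one_period (n + 1) ?_ ?_
    · have := ih (p1 + p2) ⟨hT.le, le_rfl⟩
      rw [profile_end hs2 hp2 hs3 hfix] at this
      rw [← this]; congr 1; push_cast; ring
    · intro r hr
      push_cast at hr
      have := ih (r - n * (p1 + p2)) ⟨by linarith [hr.1], by linarith [hr.2]⟩
      rw [add_sub_cancel] at this
      rw [this]
      exact profile_neg_right ha1 ha2 hu hs2 hfix (by linarith [hr.1]) (by linarith [hr.2])

/-! ### Periodicity and zeros -/

/-- in the stable case `0 < a₂ < a₁` (`|m| < 1`), `b > 0`, `p₁ > 2`, with the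
shape conditions at `h* = b/(m-1) < 0`, the solution with constant initial function `≡ h*` is
`T`-periodic and slowly oscillating with exactly two zeros in each interval `(nT, (n+1)T]`. -/
theorem stmt4 (p1 p2 a1 a2 m b hstar : ℝ)
    (ha2 : 0 < a2) (ha12 : a2 < a1) (hp1 : 2 < p1) (hp2 : 0 < p2) (hT : 1 < p1 + p2)
    (hm : m = 2 * a2 / a1 - 1) (hb : b = a1 * (p1 - 2) + a2 * (6 - 2 * p1 - p2))
    (hbpos : 0 < b) (hhstar : hstar = b / (m - 1)) (hstarneg : hstar < 0)
    (hshape1 : p1 - 3 ≤ -hstar / a1) (hshape2 : -hstar / a1 ≤ p1 - 2)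
    (hshape3 : -hstar / a1 + 3 ≤ p1 + p2)
    (x : ℝ → ℝ) (hx : IsSolutionC (A0 p1 p2 a1 a2) f0 hstar x) :
    (∀ t ≥ (0 : ℝ), x (t + (p1 + p2)) = x t) ∧
    SlowlyOscillating x ∧
    ∀ n : ℕ, {s ∈ Ioc ((n : ℝ) * (p1 + p2)) (((n : ℝ) + 1) * (p1 + p2)) | x s = 0}.encard = 2 := by
  have ha1 : 0 < a1 := ha2.trans ha12
  obtain ⟨u, hu_def⟩ : ∃ u, u = -hstar / a1 := ⟨_, rfl⟩
  rw [← hu_def] at hshape1 hshape2 hshape3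
  have hu : 0 < u := by rw [hu_def]; exact div_pos (by linarith) ha1
  have hh : hstar = -a1 * u := by rw [hu_def]; field_simp
  have hfix : a1 * (p1 - 2) + a2 * (6 - 2 * p1 - p2) = 2 * u * (a1 - a2) := by
    have hm1 : m - 1 ≠ 0 := by
      intro h0
      rw [h0, div_zero] at hhstar
      linarith
    rw [eq_div_iff hm1, hh, hm, hb] at hhstar
    rw [← hhstar]
    field_simp
    ring
  rw [hh] at hx
  have hs1 : p1 ≤ u + 3 := by linarith
  have hs2 : u + 2 ≤ p1 := by linarith
  have hprof := eq_profile_nat hx ha1 ha2 hu hp2 hs1 hs2 hshape3 hfix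
  obtain ⟨T, hTdef⟩ : ∃ T, T = p1 + p2 := ⟨_, rfl⟩
  have hT3 : u + 3 ≤ T := hTdef ▸ hshape3
  have hT0 : 0 < T := by linarith
  have neg_right : ∀ {τ}, u + 2 < τ → τ ≤ T → profile p1 a1 a2 u τ < 0 := fun h1 h2 =>
    profile_neg_right ha1 ha2 hu hs2 hfix h1 (hTdef ▸ h2)
  rw [← hTdef] at hprof ⊢
  have hval : ∀ (n : ℕ) (s : ℝ), n * T ≤ s → s ≤ (n + 1) * T →
      x s = profile p1 a1 a2 u (s - n * T) := by
    intro n s h1 h2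
    have := hprof n (s - n * T) ⟨by linarith, by linarith⟩
    rwa [add_sub_cancel] at this
  have hz1 : ∀ n : ℕ, x (n * T + u) = 0 := fun n => by
    rw [hprof n u ⟨hu.le, by linarith⟩, profile_zero_left]
  have hz2 : ∀ n : ℕ, x (n * T + (u + 2)) = 0 := fun n => by
    rw [hprof n (u + 2) ⟨by linarith, by linarith⟩, profile_zero_right hs2]
  have hpos : ∀ (n : ℕ), ∀ s ∈ Ioo (n * T + u) (n * T + (u + 2)), 0 < x s := by
    intro n s hs
    rw [hval n s (by linarith [hs.1]) (by linarith [hs.2])]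
    exact profile_pos ha1 hs2 (by linarith [hs.1]) (by linarith [hs.2])
  have hneg : ∀ (n : ℕ), ∀ s ∈ Ioo (n * T + (u + 2)) ((n + 1) * T + u), x s < 0 := by
    intro n s hs
    rcases le_total s ((n + 1) * T) with h | h
    · rw [hval n s (by linarith [hs.1]) h]
      exact neg_right (by linarith [hs.1]) (by linarith)
    · rw [hval (n + 1) s (by push_cast; exact h) (by push_cast; linarith [hs.2])]
      exact profile_neg_left ha1 (by push_cast; linarith [hs.2])
  refine ⟨?_, ?_, ?_⟩
  · intro t ht
    have h1 : (⌊t / T⌋₊ : ℝ) * T ≤ t := by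
      rw [← le_div_iff₀ hT0]; exact Nat.floor_le (by positivity)
    have h2 : t ≤ (⌊t / T⌋₊ + 1) * T := by
      rw [← div_le_iff₀ hT0]; exact (Nat.lt_floor_add_one _).le
    rw [hval _ t h1 h2, hval (⌊t / T⌋₊ + 1) (t + T) (by push_cast; linarith)
      (by push_cast; linarith)]
    congr 1
    push_cast
    ring
  · -- The zeros in increasing order: `n * T + u` has index `2 * n`, `n * T + u + 2` has `2 * n + 1`.
    obtain ⟨z, hz⟩ : ∃ z : ℕ → ℝ, ∀ k, z k = ((k / 2 : ℕ) : ℝ) * T + (u + 2 * ((k % 2 : ℕ) : ℝ)) :=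
      ⟨_, fun _ => rfl⟩
    have ev : ∀ n : ℕ, z (2 * n) = n * T + u := by
      intro n
      rw [hz, show 2 * n / 2 = n by omega, show 2 * n % 2 = 0 by omega]
      simp
    have od : ∀ n : ℕ, z (2 * n + 1) = n * T + (u + 2) := by
      intro n
      rw [hz, show (2 * n + 1) / 2 = n by omega, show (2 * n + 1) % 2 = 1 by omega]
      simp
    have ev' : ∀ n : ℕ, z (2 * n + 2) = (n + 1) * T + u := by
      intro n
      rw [show 2 * n + 2 = 2 * (n + 1) by ring, ev]; push_cast; ring
    have od' : ∀ n : ℕ, z (2 * n + 1 + 2) = (n + 1) * T + (u + 2) := by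
      intro n
      rw [show 2 * n + 1 + 2 = 2 * (n + 1) + 1 by ring, od]; push_cast; ring
    have par : ∀ k : ℕ, (∃ n, k = 2 * n) ∨ ∃ n, k = 2 * n + 1 := fun k => by
      rcases Nat.even_or_odd' k with ⟨n, h | h⟩
      exacts [Or.inl ⟨n, h⟩, Or.inr ⟨n, h⟩]
    have gap : ∀ k, 1 < z (k + 1) - z k := by
      intro k
      rcases par k with ⟨n, rfl⟩ | ⟨n, rfl⟩
      · rw [od, ev]; linarith
      · rw [ev', od]; linarith
    have zlow : ∀ k : ℕ, (k : ℝ) < z k := by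
      intro k
      induction k with
      | zero => rw [hz]; simpa using hu
      | succ k ih => push_cast; linarith [gap k]
    have zpos : ∀ k, 0 < z k := fun k => (Nat.cast_nonneg k).trans_lt (zlow k)
    refine ⟨z, strictMono_nat_of_lt_succ fun k => by linarith [gap k], zpos,
      tendsto_atTop_mono (fun k => (zlow k).le) tendsto_natCast_atTop_atTop, ?_, gap, ?_, ?_⟩
    · intro k
      rcases par k with ⟨n, rfl⟩ | ⟨n, rfl⟩
      · rw [ev]; exact hz1 n
      · rw [od]; exact hz2 n
    · intro k s hs
      rcases par k with ⟨n, rfl⟩ | ⟨n, rfl⟩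
      · rw [ev, od] at hs; exact (hpos n s hs).ne'
      · rw [od, show 2 * n + 1 + 1 = 2 * n + 2 by rfl, ev'] at hs; exact (hneg n s hs).ne
    · intro k s hs v hv
      rcases par k with ⟨n, rfl⟩ | ⟨n, rfl⟩
      · rw [ev, od] at hs
        rw [od, ev'] at hv
        exact mul_neg_of_pos_of_neg (hpos n s hs) (hneg n v hv)
      · rw [od, show 2 * n + 1 + 1 = 2 * n + 2 by rfl, ev'] at hs
        rw [od', show 2 * n + 1 + 1 = 2 * n + 2 by rfl, ev'] at hv
        exact mul_neg_of_neg_of_pos (hneg n s hs)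
          (hpos (n + 1) v (by push_cast; exact hv))
  · intro n
    have hset : {s ∈ Ioc ((n : ℝ) * T) (((n : ℝ) + 1) * T) | x s = 0}
        = {n * T + u, n * T + (u + 2)} := by
      ext s
      simp only [mem_ofPred_eq, mem_insert_iff, mem_singleton_iff, mem_Ioc]
      constructor
      · rintro ⟨⟨h1, h2⟩, h0⟩
        by_contra! hne
        rw [hval n s h1.le h2] at h0
        rcases lt_or_gt_of_ne hne.1 with h | h
        · exact (profile_neg_left ha1 (by linarith)).ne h0
        · rcases lt_or_gt_of_ne hne.2 with h' | h'
          · exact (profile_pos ha1 hs2 (by linarith) (by linarith)).ne' h0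
          · exact (neg_right (by linarith) (by linarith)).ne h0
      · rintro (rfl | rfl)
        · exact ⟨⟨by linarith, by linarith⟩, hz1 n⟩
        · exact ⟨⟨by linarith, by linarith⟩, hz2 n⟩
    rw [hset]
    exact encard_pair (by intro h; linarith)
end

section
/- Assume d > 0 and 0 < a₂ < a₁, so that k ∈ (−1, 1). Then h* := −d/(k + 1) < 0, and {h*, −h*} is a 2-cycle of F: F(h*) = −h* and F(−h*) = h*. Moreover: (1) if a₁ > 2a₂ (so k ∈ (0,1)), then for every h ≠ 0 whose forward orbit under F never hits 0, the distance from Fⁿ(h) to the set {h*, −h*} tends to 0 as n → ∞; (2) if a₂ < a₁ < 2a₂ (so k ∈ (−1,0)), then the same convergence holds for every h ∈ (−d/|k|, d/|k|) \ {0} whose forward orbit under F never hits 0. -/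
/-!
The map acts on absolute values by `|F h| = |d - k|h||`, and with `r = d / (k + 1) = -h*` one has
`d - k|h| = r - k(|h| - r)`.  Since `r ≥ 0`, the reverse triangle inequality gives
`||F h| - r| ≤ |k| * ||h| - r|` for every `h` (`abs_abs_Fmap_sub_le`).  The distance of `h` to
`{-r, r}` is exactly `||h| - r|`, so it decays along every orbit at least as fast as `|k|ⁿ`, and
`|k| < 1`.  This one estimate covers both signs of `k` and all initial points.
-/

open Set Filter

/-- The piecewise affine interval map `F(h) = kh + d` for `h < 0`, `F(h) = kh - d` for `h > 0`. -/
noncomputable def Fmap (k d h : ℝ) : ℝ := if h < 0 then k * h + d else k * h - d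

theorem abs_Fmap (k d h : ℝ) : |Fmap k d h| = |d - k * (|h|)| := by
  unfold Fmap
  split_ifs with hh
  · rw [abs_of_neg hh]
    congr 1
    ring
  · rw [abs_of_nonneg (not_lt.mp hh), abs_sub_comm]

/-- `F` contracts the distance to the 2-cycle `{-r, r}`, measured as `||h| - r|`, by `|k|`. -/
theorem abs_abs_Fmap_sub_le {k d r : ℝ} (hr : 0 ≤ r) (hd : d = r * (k + 1)) (h : ℝ) :
    |(|Fmap k d h| - r)| ≤ |k| * |(|h| - r)| := by
  have h1 := abs_abs_sub_abs_le (d - k * |h|) r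
  have h2 : d - k * |h| - r = -(k * (|h| - r)) := by rw [hd]; ring
  rwa [abs_of_nonneg hr, h2, abs_neg, abs_mul, ← abs_Fmap] at h1

theorem min_abs_sub_eq {r : ℝ} (hr : 0 ≤ r) (x : ℝ) :
    min |x - -r| |x - r| = |(|x| - r)| := by
  rw [sub_neg_eq_add]
  rcases le_total 0 x with hx | hx
  · rw [abs_of_nonneg hx, abs_of_nonneg (add_nonneg hx hr)]
    exact min_eq_right (abs_le.mpr ⟨by linarith, by linarith⟩)
  · rw [abs_of_nonpos hx, abs_of_nonpos (show x - r ≤ 0 by linarith),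
      show -x - r = -(x + r) by ring, abs_neg]
    exact min_eq_left (abs_le.mpr ⟨by linarith, by linarith⟩)

theorem tendsto_Fmap_iterate {k d r : ℝ} (hk : |k| < 1) (hr : 0 ≤ r) (hd : d = r * (k + 1))
    (h : ℝ) :
    Tendsto (fun n : ℕ => min |(Fmap k d)^[n] h - -r| |(Fmap k d)^[n] h - r|) atTop (nhds 0) := by
  simp only [min_abs_sub_eq hr]
  have bound : ∀ n : ℕ, |(|(Fmap k d)^[n] h| - r)| ≤ |k| ^ n * |(|h| - r)| := by
    intro n
    induction n with
    | zero => simp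
    | succ n ih =>
      rw [Function.iterate_succ_apply']
      calc _ ≤ |k| * |(|(Fmap k d)^[n] h| - r)| := abs_abs_Fmap_sub_le hr hd _
        _ ≤ |k| * (|k| ^ n * |(|h| - r)|) := by gcongr
        _ = _ := by ring
  refine squeeze_zero (fun _ => abs_nonneg _) bound ?_
  simpa using (tendsto_pow_atTop_nhds_zero_of_lt_one (abs_nonneg k) hk).mul_const |(|h| - r)|

/-- for `d > 0` and `0 < a₂ < a₁` (so `k = 1 - 2a₂/a₁ ∈ (-1,1)`), the point
`h* = -d/(k+1)` is negative and `{h*, -h*}` is a 2-cycle of `F`.  If `a₁ > 2a₂` the distance of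
`Fⁿ(h)` to `{h*, -h*}` tends to `0` for every `h ≠ 0` whose orbit avoids `0`; if `a₁ < 2a₂` the
same holds for every such `h` in `(-d/|k|, d/|k|)`. -/
theorem stmt12 (a1 a2 p1 p2 k d hstar : ℝ)
    (hp1 : 0 < p1) (hp2 : 0 < p2) (ha2 : 0 < a2) (ha12 : a2 < a1)
    (hk : k = 1 - 2 * a2 / a1) (hd : d = a1 * p1 + a2 * (2 - 2 * p1 - p2)) (hdpos : 0 < d)
    (hhstar : hstar = -d / (k + 1)) :
    hstar < 0 ∧
    Fmap k d hstar = -hstar ∧ Fmap k d (-hstar) = hstar ∧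
    (2 * a2 < a1 → ∀ h : ℝ, h ≠ 0 → (∀ n : ℕ, (Fmap k d)^[n] h ≠ 0) →
      Tendsto (fun n : ℕ => min |(Fmap k d)^[n] h - hstar| |(Fmap k d)^[n] h - (-hstar)|)
        atTop (nhds 0)) ∧
    (a1 < 2 * a2 → ∀ h ∈ Ioo (-(d / |k|)) (d / |k|), h ≠ 0 →
      (∀ n : ℕ, (Fmap k d)^[n] h ≠ 0) →
      Tendsto (fun n : ℕ => min |(Fmap k d)^[n] h - hstar| |(Fmap k d)^[n] h - (-hstar)|)
        atTop (nhds 0)) := by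
  have ha1 : 0 < a1 := ha2.trans ha12
  have hq : 0 < a2 / a1 := div_pos ha2 ha1
  have hq1 : a2 / a1 < 1 := (div_lt_one ha1).mpr ha12
  have hk' : k = 1 - 2 * (a2 / a1) := by rw [hk]; ring
  have hk1 : |k| < 1 := abs_lt.mpr ⟨by linarith, by linarith⟩
  have hkpos : 0 < k + 1 := by linarith
  obtain ⟨r, hr⟩ : ∃ r, r = d / (k + 1) := ⟨_, rfl⟩
  have hrpos : 0 < r := hr ▸ div_pos hdpos hkpos
  have hdr : d = r * (k + 1) := by rw [hr, div_mul_cancel₀ _ hkpos.ne']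
  obtain rfl : hstar = -r := by rw [hhstar, hr, neg_div]
  have conv : ∀ h : ℝ, Tendsto (fun n : ℕ =>
      min |(Fmap k d)^[n] h - -r| |(Fmap k d)^[n] h - (- -r)|) atTop (nhds 0) := by
    intro h
    rw [neg_neg]
    exact tendsto_Fmap_iterate hk1 hrpos.le hdr h
  refine ⟨by linarith, ?_, ?_, fun _ h _ _ => conv h, fun _ h _ _ _ => conv h⟩
  · rw [Fmap, if_pos (by linarith)]
    linarith
  · rw [Fmap, if_neg (by linarith)]
    linarith
end

section
/- Assume d > 0 and 0 < a₁ < a₂, so that k < −1. Then F has no cycle of period 2 (there is no pair h ≠ h′ of nonzero reals with F(h) = h′ and F(h′) = h), and for every h ≠ 0 the forward orbit is well defined (Fⁿ(h) ≠ 0 for all n) and diverges: |Fⁿ(h)| → ∞ as n → ∞. -/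
/-!
Since `k < -1` and `d > 0`, the map `F` sends a nonzero `h` to a point of the opposite sign with
`|F h| = |k| |h| + d ≥ |h| + d` (`abs_add_le_abs_Fmap`). Along a 2-cycle the absolute value would
strictly increase twice and return to its initial value, which is absurd; iterating the inequality
gives `|Fⁿ h| ≥ |h| + n d`, so orbits avoid `0` and diverge.
-/

open Set Filter

theorem abs_add_le_abs_Fmap {k d h : ℝ} (hk : k < -1) (hh : h ≠ 0) :
    |h| + d ≤ |Fmap k d h| := by
  unfold Fmap
  split_ifs with h0
  · rw [abs_of_neg h0]
    exact le_trans (by nlinarith) (le_abs_self _)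
  · have hpos : 0 < h := lt_of_le_of_ne (not_lt.mp h0) hh.symm
    rw [abs_of_pos hpos]
    exact le_trans (by nlinarith) (neg_le_abs _)

theorem abs_add_mul_le_abs_iterate_Fmap {k d h : ℝ} (hk : k < -1) (hd : 0 < d) (hh : h ≠ 0)
    (n : ℕ) : |h| + n * d ≤ |(Fmap k d)^[n] h| := by
  induction n with
  | zero => simp
  | succ n ih =>
    have hne : (Fmap k d)^[n] h ≠ 0 := by
      have : 0 < |h| := abs_pos.mpr hh
      exact abs_pos.mp (lt_of_lt_of_le (by positivity) ih)
    rw [Function.iterate_succ_apply']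
    have := abs_add_le_abs_Fmap (d := d) hk hne
    push_cast
    linarith

/-- for `d > 0` and `0 < a₁ < a₂` (so `k = 1 - 2a₂/a₁ < -1`), the map `F` has no
cycle of period 2, and for every `h ≠ 0` the forward orbit is well defined (never hits `0`)
and diverges: `|Fⁿ(h)| → ∞`. -/
theorem stmt13 (a1 a2 p1 p2 k d : ℝ)
    (hp1 : 0 < p1) (hp2 : 0 < p2) (ha1 : 0 < a1) (ha12 : a1 < a2)
    (hk : k = 1 - 2 * a2 / a1) (hd : d = a1 * p1 + a2 * (2 - 2 * p1 - p2)) (hdpos : 0 < d) :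
    (¬ ∃ h h' : ℝ, h ≠ 0 ∧ h' ≠ 0 ∧ h ≠ h' ∧ Fmap k d h = h' ∧ Fmap k d h' = h) ∧
    ∀ h : ℝ, h ≠ 0 →
      (∀ n : ℕ, (Fmap k d)^[n] h ≠ 0) ∧
      Tendsto (fun n : ℕ => |(Fmap k d)^[n] h|) atTop atTop := by
  have hk1 : k < -1 := by
    have : 2 < 2 * a2 / a1 := by
      rw [lt_div_iff₀ ha1]
      linarith
    linarith
  refine ⟨?_, fun h hh => ⟨fun n => ?_, ?_⟩⟩
  · rintro ⟨h, h', hh, hh', -, h1, h2⟩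
    have e1 := abs_add_le_abs_Fmap (d := d) hk1 hh
    have e2 := abs_add_le_abs_Fmap (d := d) hk1 hh'
    rw [h1] at e1
    rw [h2] at e2
    linarith
  · have : 0 < |h| := abs_pos.mpr hh
    exact abs_pos.mp
      (lt_of_lt_of_le (by positivity) (abs_add_mul_le_abs_iterate_Fmap hk1 hdpos hh n))
  · exact tendsto_atTop_mono (abs_add_mul_le_abs_iterate_Fmap hk1 hdpos hh)
      (tendsto_atTop_add_const_left _ _
        (tendsto_natCast_atTop_atTop.atTop_mul_const hdpos))
end
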